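/- arXiv:1703.06983 — 8 statements merged into one kernel-verified Lean document; each statement's English description precedes it below -/
import Mathlib

section
/- Let d > k ≥ 0 be integers, let X be a d-dimensional simplicial complex with n ≥ 1 simplices, and let X' be the complex obtained from X by attaching n+1 cones. Then X admits an acyclic matching all of whose critical simplices have dimension ≤ k if and only if X' admits an acyclic matching all of whose critical simplices have dimension ≤ k+1. -/
open Finset

/-- A (finite) simplicial complex: a finite collection of nonempty finite sets
    of vertices, closed under taking nonempty subsets. -/
def IsComplex {U : Type*} [DecidableEq U] (X : Finset (Finset U)) : Prop :=
  (∀ σ ∈ X, σ ≠ ∅) ∧ ∀ σ ∈ X, ∀ τ : Finset U, τ ⊆ σ → τ ≠ ∅ → τ ∈ X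

/-- Arc of the Hasse diagram `H(X)`: from `σ` to `τ` iff `τ ⊂ σ` and
    `dim σ = dim τ + 1` (i.e. `|σ| = |τ| + 1`). -/
def HasseArc {U : Type*} [DecidableEq U] (X : Finset (Finset U)) (σ τ : Finset U) : Prop :=
  σ ∈ X ∧ τ ∈ X ∧ τ ⊂ σ ∧ σ.card = τ.card + 1

/-- A matching on `X`: a set of arcs of `H(X)` such that every simplex of `X`
    belongs to at most one arc. -/
def IsMatching {U : Type*} [DecidableEq U] (X : Finset (Finset U))
    (M : Set (Finset U × Finset U)) : Prop :=
  (∀ p ∈ M, HasseArc X p.1 p.2) ∧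
  ∀ p ∈ M, ∀ q ∈ M, p ≠ q → p.1 ≠ q.1 ∧ p.1 ≠ q.2 ∧ p.2 ≠ q.1 ∧ p.2 ≠ q.2

/-- Arc of the modified Hasse diagram `H(X)^M`, obtained from `H(X)` by
    reversing the direction of each arc in `M`. -/
def ModArc {U : Type*} [DecidableEq U] (X : Finset (Finset U))
    (M : Set (Finset U × Finset U)) (a b : Finset U) : Prop :=
  (HasseArc X a b ∧ (a, b) ∉ M) ∨ (b, a) ∈ M

/-- An acyclic matching: a matching such that `H(X)^M` has no directed cycle. -/
def IsAcyclicMatching {U : Type*} [DecidableEq U] (X : Finset (Finset U))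
    (M : Set (Finset U × Finset U)) : Prop :=
  IsMatching X M ∧ ∀ a : Finset U, ¬ Relation.TransGen (ModArc X M) a a

/-- `σ` is a critical simplex of the matching `M` on `X`: it belongs to no arc of `M`. -/
def IsCritical {U : Type*} [DecidableEq U] (X : Finset (Finset U))
    (M : Set (Finset U × Finset U)) (σ : Finset U) : Prop :=
  σ ∈ X ∧ ∀ p ∈ M, p.1 ≠ σ ∧ p.2 ≠ σ

/-- `X` has dimension exactly `d` (the dimension of a simplex `σ` is `|σ| - 1`). -/
def HasDim {U : Type*} [DecidableEq U] (X : Finset (Finset U)) (d : ℕ) : Prop :=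
  (∀ σ ∈ X, σ.card ≤ d + 1) ∧ ∃ σ ∈ X, σ.card = d + 1

/-- The complex `X' = X ∪ { σ ∪ {wᵢ} : σ ∈ X ∪ {∅}, i = 1, …, n+1 }`, obtained
    from `X` by attaching `n+1` cones with apexes `w 0, …, w n`. -/
def coneCx {U : Type*} [DecidableEq U] (X : Finset (Finset U)) (n : ℕ)
    (w : Fin (n + 1) → U) : Finset (Finset U) :=
  X ∪ Finset.univ.biUnion (fun i : Fin (n + 1) =>
    (insert (∅ : Finset U) X).image (fun σ => insert (w i) σ))

theorem ct_acyclic_of_rank {α : Type*} (r : α → α → Prop) (f : α → ℕ)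
    (h : ∀ a b, r a b → f b < f a) (a : α) : ¬ Relation.TransGen r a a := by
  have key : ∀ b, Relation.TransGen r a b → f b < f a := by
    intro b hb
    induction hb with
    | single h1 => exact h _ _ h1
    | tail _ h1 ih => exact (h _ _ h1).trans ih
  intro ha
  exact lt_irrefl _ (key a ha)

theorem ct_exists_rank {α : Type*} (r : α → α → Prop) (X : Finset α)
    (hr : ∀ a b, r a b → b ∈ X) (h : ∀ a, ¬ Relation.TransGen r a a) :
    ∃ f : α → ℕ, ∀ a b, r a b → f b < f a := by
  classical
  refine ⟨fun a => (X.filter (fun b => Relation.TransGen r a b)).card, fun a b hab => ?_⟩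
  apply Finset.card_lt_card
  rw [Finset.ssubset_iff_of_subset]
  · refine ⟨b, ?_, ?_⟩
    · simp only [Finset.mem_filter]
      exact ⟨hr _ _ hab, Relation.TransGen.single hab⟩
    · simp only [Finset.mem_filter]
      exact fun hb => h b hb.2
  · intro c hc
    simp only [Finset.mem_filter] at hc ⊢
    exact ⟨hc.1, Relation.TransGen.head hab hc.2⟩

section
variable {U : Type*} [DecidableEq U]

theorem ct_modArc_mem {X : Finset (Finset U)} {M : Set (Finset U × Finset U)}
    (hM : IsMatching X M) {a b : Finset U} (h : ModArc X M a b) : a ∈ X ∧ b ∈ X := by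
  rcases h with h | h
  · exact ⟨h.1.1, h.1.2.1⟩
  · exact ⟨(hM.1 _ h).2.1, (hM.1 _ h).1⟩

theorem ct_mem_cone {X : Finset (Finset U)} {n : ℕ} {w : Fin (n + 1) → U} {s : Finset U} :
    s ∈ coneCx X n w ↔ s ∈ X ∨ ∃ i, ∃ σ, (σ = ∅ ∨ σ ∈ X) ∧ insert (w i) σ = s := by
  simp only [coneCx, Finset.mem_union, Finset.mem_biUnion, Finset.mem_image, Finset.mem_insert,
    Finset.mem_univ, true_and]

theorem ct_insert_inj {n : ℕ} {w : Fin (n + 1) → U} (hw : Function.Injective w)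
    {σ τ : Finset U} (hσ : ∀ i, w i ∉ σ) (hτ : ∀ i, w i ∉ τ) {i j : Fin (n + 1)}
    (h : insert (w i) σ = insert (w j) τ) : i = j ∧ σ = τ := by
  have hij : i = j := by
    have : w i ∈ insert (w j) τ := h ▸ Finset.mem_insert_self _ _
    rcases Finset.mem_insert.1 this with h1 | h1
    · exact hw h1
    · exact absurd h1 (hτ i)
  subst hij
  refine ⟨rfl, ?_⟩
  rw [← Finset.erase_insert (hσ i), h, Finset.erase_insert (hτ i)]

theorem ct_arc_insert {n : ℕ} {w : Fin (n + 1) → U} (hw : Function.Injective w)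
    {σ τ : Finset U} (hσ : ∀ i, w i ∉ σ) (hτ : ∀ i, w i ∉ τ) {i j : Fin (n + 1)}
    (h : insert (w j) τ ⊂ insert (w i) σ)
    (hc : (insert (w i) σ).card = (insert (w j) τ).card + 1) :
    i = j ∧ τ ⊂ σ ∧ σ.card = τ.card + 1 := by
  have hij : i = j := by
    have : w j ∈ insert (w i) σ := h.1 (Finset.mem_insert_self _ _)
    rcases Finset.mem_insert.1 this with h1 | h1
    · exact (hw h1).symm
    · exact absurd h1 (hσ j)
  subst hij
  rw [Finset.card_insert_of_notMem (hσ i), Finset.card_insert_of_notMem (hτ i)] at hc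
  have hc' : σ.card = τ.card + 1 := by omega
  refine ⟨rfl, ?_, hc'⟩
  have hsub : τ ⊆ σ := (Finset.insert_subset_insert_iff (hτ i)).1 h.1
  refine Finset.ssubset_iff_subset_ne.2 ⟨hsub, ?_⟩
  rintro rfl
  omega

theorem ct_insert_arc {n : ℕ} {w : Fin (n + 1) → U}
    {σ τ : Finset U} (hσ : ∀ i, w i ∉ σ) (hτ : ∀ i, w i ∉ τ) (i : Fin (n + 1))
    (h : τ ⊂ σ) (hc : σ.card = τ.card + 1) :
    insert (w i) τ ⊂ insert (w i) σ ∧ (insert (w i) σ).card = (insert (w i) τ).card + 1 := by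
  have hc' : (insert (w i) σ).card = (insert (w i) τ).card + 1 := by
    rw [Finset.card_insert_of_notMem (hσ i), Finset.card_insert_of_notMem (hτ i), hc]
  refine ⟨Finset.ssubset_iff_subset_ne.2 ⟨Finset.insert_subset_insert _ h.1, ?_⟩, hc'⟩
  intro he
  rw [he] at hc'
  omega

theorem ct_arc_drop {a : U} {σ τ : Finset U} (hσ : a ∉ σ) (hτ : a ∉ τ)
    (h : τ ⊂ insert a σ) (hc : (insert a σ).card = τ.card + 1) : τ = σ := by
  rw [Finset.card_insert_of_notMem hσ] at hc
  apply Finset.eq_of_subset_of_card_le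
  · exact (Finset.subset_insert_iff_of_notMem hτ).1 h.1
  · omega

theorem ct_backward (k n : ℕ)
    (X : Finset (Finset U)) (hX : IsComplex X) (hn : X.card = n)
    (w : Fin (n + 1) → U) (hw : Function.Injective w)
    (hwX : ∀ i : Fin (n + 1), ∀ σ ∈ X, w i ∉ σ)
    (M' : Set (Finset U × Finset U)) (hM' : IsAcyclicMatching (coneCx X n w) M')
    (hcrit : ∀ σ, IsCritical (coneCx X n w) M' σ → σ.card ≤ k + 2) :
    ∃ M : Set (Finset U × Finset U), IsAcyclicMatching X M ∧
        ∀ σ, IsCritical X M σ → σ.card ≤ k + 1 := by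
  have hnw : ∀ σ ∈ X, ∀ i, w i ∉ σ := fun σ hσ i => hwX i σ hσ
  obtain ⟨i, hi⟩ : ∃ i, ∀ σ ∈ X, (insert (w i) σ, σ) ∉ M' := by
    by_contra! hcon
    choose f hfX hfM using hcon
    have hinj : Function.Injective (fun i => (⟨f i, hfX i⟩ : X)) := by
      intro a b hab
      have hab' : f a = f b := congrArg Subtype.val hab
      by_contra hne
      have h2 := hM'.1.2 _ (hfM a) _ (hfM b) (by
        intro he
        exact hne (ct_insert_inj hw (hnw _ (hfX a)) (hnw _ (hfX b)) (congrArg Prod.fst he)).1)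
      exact h2.2.2.2 hab'
    have := Fintype.card_le_of_injective _ hinj
    simp at this
    omega
  have hback : ∀ σ τ, σ ∈ X → τ ∈ X → insert (w i) σ = insert (w i) τ → σ = τ :=
    fun σ τ hσ hτ h => (ct_insert_inj hw (hnw _ hσ) (hnw _ hτ) h).2
  refine ⟨{p | p.1 ∈ X ∧ p.2 ∈ X ∧ (insert (w i) p.1, insert (w i) p.2) ∈ M'}, ⟨⟨?_, ?_⟩, ?_⟩, ?_⟩
  · rintro ⟨σ, τ⟩ ⟨h1, h2, h3⟩
    have h4 := hM'.1.1 _ h3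
    exact ⟨h1, h2, (ct_arc_insert hw (hnw _ h1) (hnw _ h2) h4.2.2.1 h4.2.2.2).2⟩
  · rintro ⟨σ, τ⟩ ⟨h1, h2, h3⟩ ⟨σ', τ'⟩ ⟨h1', h2', h3'⟩ hne
    have h4 := hM'.1.2 _ h3 _ h3' (by
      intro he
      apply hne
      have e1 := hback _ _ h1 h1' (congrArg Prod.fst he)
      have e2 := hback _ _ h2 h2' (congrArg Prod.snd he)
      exact Prod.ext e1 e2)
    exact ⟨fun h => h4.1 (congrArg (insert (w i)) h), fun h => h4.2.1 (congrArg (insert (w i)) h),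
      fun h => h4.2.2.1 (congrArg (insert (w i)) h), fun h => h4.2.2.2 (congrArg (insert (w i)) h)⟩
  · intro a ha
    apply hM'.2 (insert (w i) a)
    refine Relation.TransGen.lift (p := ModArc (coneCx X n w) M')
      (fun s : Finset U => insert (w i) s) ?_ a a ha
    rintro σ τ (⟨⟨h1, h2, h3, h4⟩, h5⟩ | h)
    · left
      refine ⟨⟨ct_mem_cone.2 (Or.inr ⟨i, σ, Or.inr h1, rfl⟩),
        ct_mem_cone.2 (Or.inr ⟨i, τ, Or.inr h2, rfl⟩),
        ct_insert_arc (hnw _ h1) (hnw _ h2) i h3 h4⟩, fun hm => h5 ⟨h1, h2, hm⟩⟩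
    · right
      exact h.2.2
  · intro σ ⟨hσ, hσc⟩
    by_cases hc : IsCritical (coneCx X n w) M' (insert (w i) σ)
    · have := hcrit _ hc
      rw [Finset.card_insert_of_notMem (hnw _ hσ i)] at this
      omega
    · have hmem : insert (w i) σ ∈ coneCx X n w := ct_mem_cone.2 (Or.inr ⟨i, σ, Or.inr hσ, rfl⟩)
      have hex : ∃ p ∈ M', p.1 = insert (w i) σ ∨ p.2 = insert (w i) σ := by
        by_contra! hcon
        exact hc ⟨hmem, hcon⟩
      obtain ⟨⟨s, t⟩, hp, rfl | rfl⟩ := hex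
      · obtain ⟨-, ht, hsub, hcard⟩ := hM'.1.1 _ hp
        rcases ct_mem_cone.1 ht with ht | ⟨j, τ, hτ, rfl⟩
        · have := ct_arc_drop (hnw _ hσ i) (hnw _ ht i) hsub hcard
          simp only at this
          subst this
          exact absurd hp (hi _ ht)
        · have hτw : ∀ i, w i ∉ τ := by
            rcases hτ with rfl | hτ
            · simp
            · exact hnw _ hτ
          obtain ⟨rfl, h1, h2⟩ := ct_arc_insert hw (hnw _ hσ) hτw hsub hcard
          rcases hτ with rfl | hτ
          · simp at h2
            omega
          · exact absurd rfl (hσc (σ, τ) ⟨hσ, hτ, hp⟩).1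
      · obtain ⟨hs, -, hsub, hcard⟩ := hM'.1.1 _ hp
        rcases ct_mem_cone.1 hs with hs | ⟨j, τ, hτ, rfl⟩
        · exact absurd (hsub.1 (Finset.mem_insert_self _ _)) (hnw _ hs i)
        · have hτw : ∀ i, w i ∉ τ := by
            rcases hτ with rfl | hτ
            · simp
            · exact hnw _ hτ
          obtain ⟨rfl, h1, h2⟩ := ct_arc_insert hw hτw (hnw _ hσ) hsub hcard
          rcases hτ with rfl | hτ
          · simp at h2
          · exact absurd rfl (hσc (τ, σ) ⟨hτ, hσ, hp⟩).2

theorem ct_forward (d k n : ℕ)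
    (X : Finset (Finset U)) (hX : IsComplex X) (hd : HasDim X d)
    (w : Fin (n + 1) → U) (hw : Function.Injective w)
    (hwX : ∀ i : Fin (n + 1), ∀ σ ∈ X, w i ∉ σ)
    (M : Set (Finset U × Finset U)) (hM : IsAcyclicMatching X M)
    (hcrit : ∀ σ, IsCritical X M σ → σ.card ≤ k + 1) :
    ∃ M' : Set (Finset U × Finset U), IsAcyclicMatching (coneCx X n w) M' ∧
        ∀ σ, IsCritical (coneCx X n w) M' σ → σ.card ≤ k + 2 := by
  classical
  have hnw : ∀ σ ∈ X, ∀ i, w i ∉ σ := fun σ hσ i => hwX i σ hσ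
  have hnw' : ∀ σ, σ = ∅ ∨ σ ∈ X → ∀ i, w i ∉ σ := by
    rintro σ (rfl | h)
    · simp
    · exact hnw _ h
  have hinj : ∀ σ τ, σ ∈ X → τ ∈ X → ∀ i j, insert (w i) σ = insert (w j) τ → i = j ∧ σ = τ :=
    fun σ τ hσ hτ i j h => ct_insert_inj hw (hnw _ hσ) (hnw _ hτ) h
  have hne : ∀ σ τ, τ ∈ X → ∀ i, insert (w i) σ ≠ τ := by
    rintro σ τ hτ i rfl
    exact hnw _ hτ i (Finset.mem_insert_self _ _)
  have hMX : ∀ p ∈ M, p.1 ∈ X ∧ p.2 ∈ X := fun p hp => ⟨(hM.1.1 p hp).1, (hM.1.1 p hp).2.1⟩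
  have hin : ∀ i σ, σ ∈ X → insert (w i) σ ∈ coneCx X n w :=
    fun i σ hσ => ct_mem_cone.2 (Or.inr ⟨i, σ, Or.inr hσ, rfl⟩)
  obtain ⟨ρ, hρ⟩ := ct_exists_rank (ModArc X M) X (fun a b h => (ct_modArc_mem hM.1 h).2) hM.2
  refine ⟨{p | (∃ σ ∈ X, p = (insert (w 0) σ, σ)) ∨
    ∃ i, i ≠ 0 ∧ ∃ q ∈ M, p = (insert (w i) q.1, insert (w i) q.2)}, ⟨⟨?_, ?_⟩, ?_⟩, ?_⟩
  · rintro p (⟨σ, hσ, rfl⟩ | ⟨i, hi, q, hq, rfl⟩)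
    · exact ⟨hin _ _ hσ, ct_mem_cone.2 (Or.inl hσ), Finset.ssubset_insert (hnw _ hσ 0),
        Finset.card_insert_of_notMem (hnw _ hσ 0)⟩
    · obtain ⟨h1, h2, h3, h4⟩ := hM.1.1 q hq
      exact ⟨hin _ _ h1, hin _ _ h2, ct_insert_arc (hnw _ h1) (hnw _ h2) i h3 h4⟩
  · rintro p (⟨σ, hσ, rfl⟩ | ⟨i, hi, q, hq, rfl⟩) p' (⟨σ', hσ', rfl⟩ | ⟨i', hi', q', hq', rfl⟩) hpp
    · have hss : σ ≠ σ' := by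
        rintro rfl
        exact hpp rfl
      exact ⟨fun h => hss (hinj _ _ hσ hσ' _ _ h).2, hne _ _ hσ' _, (hne _ _ hσ _).symm, hss⟩
    · obtain ⟨h1, h2⟩ := hMX q' hq'
      exact ⟨fun h => hi' (hinj _ _ hσ h1 _ _ h).1.symm, fun h => hi' (hinj _ _ hσ h2 _ _ h).1.symm,
        (hne _ _ hσ _).symm, (hne _ _ hσ _).symm⟩
    · obtain ⟨h1, h2⟩ := hMX q hq
      exact ⟨fun h => hi (hinj _ _ h1 hσ' _ _ h).1, hne _ _ hσ' _,
        fun h => hi (hinj _ _ h2 hσ' _ _ h).1, hne _ _ hσ' _⟩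
    · obtain ⟨h1, h2⟩ := hMX q hq
      obtain ⟨h1', h2'⟩ := hMX q' hq'
      by_cases hii : i = i'
      · subst hii
        have hqq : q ≠ q' := by
          rintro rfl
          exact hpp rfl
        obtain ⟨a, b, c, e⟩ := hM.1.2 q hq q' hq' hqq
        exact ⟨fun h => a (hinj _ _ h1 h1' _ _ h).2, fun h => b (hinj _ _ h1 h2' _ _ h).2,
          fun h => c (hinj _ _ h2 h1' _ _ h).2, fun h => e (hinj _ _ h2 h2' _ _ h).2⟩
      · exact ⟨fun h => hii (hinj _ _ h1 h1' _ _ h).1, fun h => hii (hinj _ _ h1 h2' _ _ h).1,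
          fun h => hii (hinj _ _ h2 h1' _ _ h).1, fun h => hii (hinj _ _ h2 h2' _ _ h).1⟩
  · -- rank function
    obtain ⟨f, hf1, hf2, hf3, hf4⟩ : ∃ f : Finset U → ℕ,
        (∀ σ ∈ X, f σ = 2 * σ.card + 1) ∧
        (∀ σ, σ = ∅ ∨ σ ∈ X → f (insert (w 0) σ) = 2 * σ.card) ∧
        (∀ i, i ≠ 0 → f (insert (w i) ∅) = 2 * d + 4) ∧
        (∀ i, i ≠ 0 → ∀ σ ∈ X, f (insert (w i) σ) = 2 * d + 5 + ρ σ) := by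
      have hb : ∀ σ, σ = ∅ ∨ σ ∈ X → σ \ Finset.univ.image w = σ := by
        intro σ hσ
        rw [Finset.sdiff_eq_self_iff_disjoint, Finset.disjoint_left]
        intro x hx hx'
        obtain ⟨i, -, rfl⟩ := Finset.mem_image.1 hx'
        exact hnw' _ hσ i hx
      have hb' : ∀ σ, σ = ∅ ∨ σ ∈ X → ∀ i, insert (w i) σ \ Finset.univ.image w = σ := by
        intro σ hσ i
        rw [Finset.insert_sdiff_of_mem _ (Finset.mem_image_of_mem _ (Finset.mem_univ i)), hb σ hσ]
      refine ⟨fun s => if ∃ i, i ≠ 0 ∧ w i ∈ s then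
          (if s \ Finset.univ.image w = ∅ then 2 * d + 4
            else 2 * d + 5 + ρ (s \ Finset.univ.image w))
        else 2 * (s \ Finset.univ.image w).card + (if w 0 ∈ s then 0 else 1), ?_, ?_, ?_, ?_⟩
      · intro σ hσ
        have h1 : ¬ ∃ i, i ≠ 0 ∧ w i ∈ σ := fun ⟨i, _, h⟩ => hnw _ hσ i h
        simp only [if_neg h1, hb σ (Or.inr hσ), if_neg (hnw _ hσ 0)]
      · intro σ hσ
        have h1 : ¬ ∃ i, i ≠ 0 ∧ w i ∈ insert (w 0) σ := by
          rintro ⟨i, hi, h⟩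
          rcases Finset.mem_insert.1 h with h | h
          · exact hi (hw h)
          · exact hnw' _ hσ i h
        simp only [if_neg h1, hb' σ hσ, if_pos (Finset.mem_insert_self (w 0) σ), add_zero]
      · intro i hi
        have h1 : ∃ j, j ≠ 0 ∧ w j ∈ insert (w i) (∅ : Finset U) :=
          ⟨i, hi, Finset.mem_insert_self _ _⟩
        simp only [if_pos h1, hb' ∅ (Or.inl rfl), if_true]
      · intro i hi σ hσ
        have h1 : ∃ j, j ≠ 0 ∧ w j ∈ insert (w i) σ := ⟨i, hi, Finset.mem_insert_self _ _⟩
        simp only [if_pos h1, hb' σ (Or.inr hσ), if_neg (hX.1 σ hσ)]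
    apply ct_acyclic_of_rank _ f
    rintro s t (⟨⟨hs, ht, hsub, hcard⟩, hnm⟩ | h)
    · rcases ct_mem_cone.1 hs with hs | ⟨i, σ, hσ, rfl⟩
      · rcases ct_mem_cone.1 ht with ht | ⟨j, τ, hτ, rfl⟩
        · rw [hf1 _ hs, hf1 _ ht]
          omega
        · exact absurd (hsub.1 (Finset.mem_insert_self _ _)) (hnw _ hs j)
      · rcases ct_mem_cone.1 ht with ht | ⟨j, τ, hτ, rfl⟩
        · have := ct_arc_drop (hnw' _ hσ i) (hnw _ ht i) hsub hcard
          subst this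
          by_cases hi : i = 0
          · subst hi
            exact absurd (Or.inl ⟨t, ht, rfl⟩) hnm
          · rw [hf1 _ ht, hf4 i hi _ ht]
            have := hd.1 _ ht
            omega
        · obtain ⟨rfl, h1, h2⟩ := ct_arc_insert hw (hnw' _ hσ) (hnw' _ hτ) hsub hcard
          by_cases hi : i = 0
          · subst hi
            rw [hf2 _ hσ, hf2 _ hτ]
            omega
          · have hσX : σ ∈ X := by
              rcases hσ with rfl | hσ
              · simp at h2
              · exact hσ
            rcases hτ with rfl | hτ
            · rw [hf3 i hi, hf4 i hi _ hσX]
              omega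
            · rw [hf4 i hi _ hτ, hf4 i hi _ hσX]
              have := hρ σ τ (Or.inl ⟨⟨hσX, hτ, h1, h2⟩,
                fun hm => hnm (Or.inr ⟨i, hi, (σ, τ), hm, rfl⟩)⟩)
              omega
    · rcases h with ⟨σ, hσ, he⟩ | ⟨i, hi, q, hq, he⟩
      · obtain ⟨rfl, rfl⟩ := Prod.mk.inj he
        rw [hf1 _ hσ, hf2 _ (Or.inr hσ)]
        omega
      · obtain ⟨rfl, rfl⟩ := Prod.mk.inj he
        rw [hf4 i hi _ (hMX q hq).1, hf4 i hi _ (hMX q hq).2]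
        have := hρ q.2 q.1 (Or.inr hq)
        omega
  · rintro s ⟨hs, hc⟩
    rcases ct_mem_cone.1 hs with hs | ⟨i, σ, rfl | hσ, rfl⟩
    · exact absurd rfl (hc _ (Or.inl ⟨s, hs, rfl⟩)).2
    · simp
    · by_cases hi : i = 0
      · subst hi
        exact absurd rfl (hc _ (Or.inl ⟨σ, hσ, rfl⟩)).1
      · rw [Finset.card_insert_of_notMem (hnw _ hσ i)]
        have := hcrit σ ⟨hσ, fun q hq => ?_⟩
        · omega
        · have := hc _ (Or.inr ⟨i, hi, q, hq, rfl⟩)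
          exact ⟨fun h => this.1 (congrArg (insert (w i)) h), fun h => this.2 (congrArg (insert (w i)) h)⟩

end

/-- `X` admits an acyclic matching with all critical simplices of
    dimension ≤ k iff `X'` admits an acyclic matching with all critical simplices
    of dimension ≤ k+1.  (dim σ ≤ k ↔ |σ| ≤ k+1.) -/
theorem collapsibility_transfer {U : Type*} [DecidableEq U] (d k n : ℕ) (hdk : d > k)
    (X : Finset (Finset U)) (hX : IsComplex X) (hd : HasDim X d)
    (hn : X.card = n) (hn1 : 1 ≤ n)
    (w : Fin (n + 1) → U) (hw : Function.Injective w)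
    (hwX : ∀ i : Fin (n + 1), ∀ σ ∈ X, w i ∉ σ) :
    (∃ M : Set (Finset U × Finset U), IsAcyclicMatching X M ∧
        ∀ σ, IsCritical X M σ → σ.card ≤ k + 1) ↔
    (∃ M' : Set (Finset U × Finset U), IsAcyclicMatching (coneCx X n w) M' ∧
        ∀ σ, IsCritical (coneCx X n w) M' σ → σ.card ≤ k + 2) := by
  constructor
  · rintro ⟨M, hM, hc⟩
    exact ct_forward d k n X hX hd w hw hwX M hM hc
  · rintro ⟨M', hM', hc⟩
    exact ct_backward k n X hX hn w hw hwX M' hM' hc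
end

section
/- Let M be an acyclic matching on X and let M' = { (σ ∪ {w_1} → σ) : σ ∈ X } ∪ { (σ ∪ {w_i} → τ ∪ {w_i}) : (σ → τ) ∈ M, 2 ≤ i ≤ n+1 }. Then M' is an acyclic matching on X', i.e., the directed graph obtained from the Hasse diagram H(X') by reversing the arcs of M' contains no directed cycle. -/
open Finset

/-- The matching `M'` on `X'`:
    `M' = { (σ ∪ {w₁} → σ) : σ ∈ X } ∪ { (σ ∪ {wᵢ} → τ ∪ {wᵢ}) : (σ → τ) ∈ M, 2 ≤ i ≤ n+1 }`. -/
def coneMatch {U : Type*} [DecidableEq U] (X : Finset (Finset U))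
    (M : Set (Finset U × Finset U)) (n : ℕ) (w : Fin (n + 1) → U) :
    Set (Finset U × Finset U) :=
  {p | ∃ σ ∈ X, p = (insert (w 0) σ, σ)} ∪
  {p | ∃ q ∈ M, ∃ i : Fin (n + 1), i ≠ 0 ∧ p = (insert (w i) q.1, insert (w i) q.2)}

/-- `σ` avoids all apexes. -/
def Avoids {U : Type*} {n : ℕ} (w : Fin (n + 1) → U) (σ : Finset U) : Prop :=
  ∀ i, w i ∉ σ

lemma insert_apex_inj {U : Type*} [DecidableEq U] {n : ℕ} {w : Fin (n + 1) → U}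
    (hw : Function.Injective w) {σ τ : Finset U} (hσ : Avoids w σ) (hτ : Avoids w τ)
    {i j : Fin (n + 1)} (h : insert (w i) σ = insert (w j) τ) : i = j ∧ σ = τ := by
  have hij : i = j := by
    have h1 : w i ∈ insert (w j) τ := h ▸ mem_insert_self _ _
    rcases mem_insert.1 h1 with h2 | h2
    · exact hw h2
    · exact absurd h2 (hτ i)
  subst hij
  refine ⟨rfl, ?_⟩
  rw [← erase_insert (hσ i), h, erase_insert (hτ i)]

lemma insert_apex_not_avoids {U : Type*} [DecidableEq U] {n : ℕ} {w : Fin (n + 1) → U}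
    {σ τ : Finset U} (hτ : Avoids w τ) (i : Fin (n + 1)) : insert (w i) σ ≠ τ := by
  intro h
  exact hτ i (h ▸ mem_insert_self _ _)

lemma mem_coneCx_iff {U : Type*} [DecidableEq U] {X : Finset (Finset U)} {n : ℕ}
    {w : Fin (n + 1) → U} {a : Finset U} : a ∈ coneCx X n w ↔
      a ∈ X ∨ ∃ i, ∃ σ, (σ = ∅ ∨ σ ∈ X) ∧ a = insert (w i) σ := by
  simp only [coneCx, mem_union, mem_biUnion, mem_univ, true_and, mem_image, mem_insert]
  constructor
  · rintro (h | ⟨i, σ, h, rfl⟩)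
    · exact Or.inl h
    · exact Or.inr ⟨i, σ, h, rfl⟩
  · rintro (h | ⟨i, σ, h, rfl⟩)
    · exact Or.inl h
    · exact Or.inr ⟨i, σ, h, rfl⟩

open Classical in
/-- Level: 0 on the first cone, 1 on the base, 2 on the other cones. -/
noncomputable def coneLevel {U : Type*} {n : ℕ} (w : Fin (n + 1) → U) (a : Finset U) : ℕ :=
  if w 0 ∈ a then 0 else if ∃ i, w i ∈ a then 2 else 1

/-- Remove all apexes. -/
def coneStrip {U : Type*} [DecidableEq U] {n : ℕ} (w : Fin (n + 1) → U) (a : Finset U) :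
    Finset U := a \ Finset.univ.image w

lemma coneLevel_base {U : Type*} {n : ℕ} {w : Fin (n + 1) → U} {σ : Finset U}
    (h : Avoids w σ) : coneLevel w σ = 1 := by
  have h2 : ¬ ∃ i, w i ∈ σ := fun ⟨i, hi⟩ => h i hi
  simp [coneLevel, h 0, h2]

lemma coneLevel_zero {U : Type*} [DecidableEq U] {n : ℕ} {w : Fin (n + 1) → U}
    {σ : Finset U} : coneLevel w (insert (w 0) σ) = 0 := by
  simp [coneLevel]

lemma coneLevel_succ {U : Type*} [DecidableEq U] {n : ℕ} {w : Fin (n + 1) → U}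
    (hw : Function.Injective w) {σ : Finset U} (h : Avoids w σ) {i : Fin (n + 1)}
    (hi : i ≠ 0) : coneLevel w (insert (w i) σ) = 2 := by
  have h1 : w 0 ∉ insert (w i) σ := by
    intro h1
    rcases mem_insert.1 h1 with h2 | h2
    · exact hi (hw h2).symm
    · exact h 0 h2
  have h2 : ∃ j, w j ∈ insert (w i) σ := ⟨i, mem_insert_self _ _⟩
  unfold coneLevel
  rw [if_neg h1, if_pos h2]

lemma coneStrip_insert {U : Type*} [DecidableEq U] {n : ℕ} {w : Fin (n + 1) → U}
    {σ : Finset U} (h : Avoids w σ) (i : Fin (n + 1)) :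
    coneStrip w (insert (w i) σ) = σ := by
  ext x
  simp only [coneStrip, mem_sdiff, mem_insert, mem_image, mem_univ, true_and]
  constructor
  · rintro ⟨h1 | h1, h2⟩
    · exact absurd ⟨i, h1.symm⟩ h2
    · exact h1
  · intro hx
    refine ⟨Or.inr hx, ?_⟩
    rintro ⟨j, rfl⟩
    exact h j hx

/-- The strict order witnessing acyclicity. -/
def coneRel {U : Type*} [DecidableEq U] (X : Finset (Finset U))
    (M : Set (Finset U × Finset U)) {n : ℕ} (w : Fin (n + 1) → U) (a b : Finset U) : Prop :=
  coneLevel w b < coneLevel w a ∨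
  (coneLevel w b = coneLevel w a ∧ coneLevel w a ≠ 2 ∧ b.card < a.card) ∨
  (coneLevel w b = coneLevel w a ∧ coneLevel w a = 2 ∧ coneStrip w a ≠ ∅ ∧
    (coneStrip w b = ∅ ∨ Relation.TransGen (ModArc X M) (coneStrip w a) (coneStrip w b)))

lemma coneRel_trans {U : Type*} [DecidableEq U] {X : Finset (Finset U)}
    {M : Set (Finset U × Finset U)} {n : ℕ} {w : Fin (n + 1) → U} {a b c : Finset U}
    (h1 : coneRel X M w a b) (h2 : coneRel X M w b c) : coneRel X M w a c := by
  unfold coneRel at *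
  rcases h1 with h1 | ⟨h1, h1', h1''⟩ | ⟨h1, h1', h1n, h1''⟩ <;>
  rcases h2 with h2 | ⟨h2, h2', h2''⟩ | ⟨h2, h2', h2n, h2''⟩
  · left; omega
  · left; omega
  · left; omega
  · left; omega
  · right; left; omega
  · omega
  · left; omega
  · omega
  · right; right
    refine ⟨by omega, h1', h1n, ?_⟩
    rcases h1'' with h | h
    · exact absurd h h2n
    · rcases h2'' with h' | h'
      · exact Or.inl h'
      · exact Or.inr (h.trans h')

lemma hasseArc_insert {U : Type*} [DecidableEq U] {X : Finset (Finset U)} {n : ℕ}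
    {w : Fin (n + 1) → U} (hav : ∀ σ ∈ X, Avoids w σ) {σ τ : Finset U}
    (h : HasseArc X σ τ) (i : Fin (n + 1)) :
    HasseArc (coneCx X n w) (insert (w i) σ) (insert (w i) τ) := by
  obtain ⟨h1, h2, h3, h4⟩ := h
  have hc : (insert (w i) σ).card = (insert (w i) τ).card + 1 := by
    rw [card_insert_of_notMem (hav σ h1 i), card_insert_of_notMem (hav τ h2 i), h4]
  refine ⟨mem_coneCx_iff.2 (Or.inr ⟨i, σ, Or.inr h1, rfl⟩),
    mem_coneCx_iff.2 (Or.inr ⟨i, τ, Or.inr h2, rfl⟩), ?_, hc⟩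
  refine Finset.ssubset_iff_subset_ne.2 ⟨insert_subset_insert _ h3.1, ?_⟩
  intro h
  rw [h] at hc
  omega

lemma coneMatch_isMatching {U : Type*} [DecidableEq U] {X : Finset (Finset U)} {n : ℕ}
    {w : Fin (n + 1) → U} (hw : Function.Injective w) (hav : ∀ σ ∈ X, Avoids w σ)
    {M : Set (Finset U × Finset U)} (hM : IsMatching X M) :
    IsMatching (coneCx X n w) (coneMatch X M n w) := by
  obtain ⟨hA, hD⟩ := hM
  constructor
  · rintro p (⟨σ, hσ, rfl⟩ | ⟨q, hq, i, hi, rfl⟩)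
    · exact ⟨mem_coneCx_iff.2 (Or.inr ⟨0, σ, Or.inr hσ, rfl⟩),
        mem_coneCx_iff.2 (Or.inl hσ), ssubset_insert (hav σ hσ 0),
        card_insert_of_notMem (hav σ hσ 0)⟩
    · exact hasseArc_insert hav (hA q hq) i
  · rintro p (⟨σ, hσ, rfl⟩ | ⟨q, hq, i, hi, rfl⟩) p' (⟨τ, hτ, rfl⟩ | ⟨r, hr, j, hj, rfl⟩) hne
    · refine ⟨fun h => ?_, insert_apex_not_avoids (hav τ hτ) 0,
        (insert_apex_not_avoids (hav σ hσ) 0).symm, fun h => ?_⟩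
      · exact hne (by rw [(insert_apex_inj hw (hav σ hσ) (hav τ hτ) h).2])
      · exact hne (by rw [show σ = τ from h])
    · have r1 := hav _ (hA r hr).1
      have r2 := hav _ (hA r hr).2.1
      exact ⟨fun h => hj (insert_apex_inj hw (hav σ hσ) r1 h).1.symm,
        fun h => hj (insert_apex_inj hw (hav σ hσ) r2 h).1.symm,
        (insert_apex_not_avoids (hav σ hσ) j).symm, (insert_apex_not_avoids (hav σ hσ) j).symm⟩
    · have q1 := hav _ (hA q hq).1
      have q2 := hav _ (hA q hq).2.1
      exact ⟨fun h => hi (insert_apex_inj hw q1 (hav τ hτ) h).1,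
        insert_apex_not_avoids (hav τ hτ) i,
        fun h => hi (insert_apex_inj hw q2 (hav τ hτ) h).1,
        insert_apex_not_avoids (hav τ hτ) i⟩
    · have q1 := hav _ (hA q hq).1
      have q2 := hav _ (hA q hq).2.1
      have r1 := hav _ (hA r hr).1
      have r2 := hav _ (hA r hr).2.1
      have key : i = j → q ≠ r := by
        rintro rfl rfl
        exact hne rfl
      refine ⟨fun h => ?_, fun h => ?_, fun h => ?_, fun h => ?_⟩
      · obtain ⟨e, f⟩ := insert_apex_inj hw q1 r1 h
        exact (hD q hq r hr (key e)).1 f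
      · obtain ⟨e, f⟩ := insert_apex_inj hw q1 r2 h
        exact (hD q hq r hr (key e)).2.1 f
      · obtain ⟨e, f⟩ := insert_apex_inj hw q2 r1 h
        exact (hD q hq r hr (key e)).2.2.1 f
      · obtain ⟨e, f⟩ := insert_apex_inj hw q2 r2 h
        exact (hD q hq r hr (key e)).2.2.2 f

lemma modArc_coneRel {U : Type*} [DecidableEq U] {X : Finset (Finset U)} {n : ℕ}
    (hne : ∀ σ ∈ X, σ ≠ ∅)
    {w : Fin (n + 1) → U} (hw : Function.Injective w) (hav : ∀ σ ∈ X, Avoids w σ)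
    {M : Set (Finset U × Finset U)} (hM : IsMatching X M) {a b : Finset U}
    (h : ModArc (coneCx X n w) (coneMatch X M n w) a b) : coneRel X M w a b := by
  have hav' : ∀ σ, (σ = ∅ ∨ σ ∈ X) → Avoids w σ := by
    rintro σ (rfl | h)
    · intro i; simp
    · exact hav σ h
  rcases h with ⟨⟨ha, hb, hs, hc⟩, hnm⟩ | (⟨σ, hσ, h⟩ | ⟨q, hq, i, hi, h⟩)
  · rcases mem_coneCx_iff.1 ha with haX | ⟨i, σ, hσ, rfl⟩ <;>
    rcases mem_coneCx_iff.1 hb with hbX | ⟨j, τ, hτ, rfl⟩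
    · right; left
      rw [coneLevel_base (hav _ haX), coneLevel_base (hav _ hbX)]
      omega
    · exact absurd (hs.1 (mem_insert_self _ _)) (hav _ haX j)
    · have hbs : b = σ := by
        apply eq_of_subset_of_card_le
        · intro x hx
          rcases mem_insert.1 (hs.1 hx) with rfl | h
          · exact absurd hx (hav _ hbX i)
          · exact h
        · rw [card_insert_of_notMem (hav' σ hσ i)] at hc
          omega
      subst hbs
      by_cases hi : i = 0
      · subst hi
        exact absurd (Or.inl ⟨b, hbX, rfl⟩) hnm
      · left
        rw [coneLevel_base (hav _ hbX), coneLevel_succ hw (hav _ hbX) hi]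
        omega
    · have hij : i = j := by
        rcases mem_insert.1 (hs.1 (mem_insert_self _ _)) with h | h
        · exact (hw h).symm
        · exact absurd h (hav' σ hσ j)
      subst hij
      by_cases hi : i = 0
      · subst hi
        right; left
        rw [coneLevel_zero, coneLevel_zero]
        omega
      · right; right
        rw [coneLevel_succ hw (hav' σ hσ) hi, coneLevel_succ hw (hav' τ hτ) hi,
          coneStrip_insert (hav' σ hσ), coneStrip_insert (hav' τ hτ)]
        rw [card_insert_of_notMem (hav' σ hσ i), card_insert_of_notMem (hav' τ hτ i)] at hc
        have hσ0 : σ ≠ ∅ := by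
          rintro rfl
          simp at hc
        refine ⟨rfl, rfl, hσ0, ?_⟩
        rcases hτ with hτ | hτ
        · exact Or.inl hτ
        · right
          have hσ' := hσ.resolve_left hσ0
          apply Relation.TransGen.single
          left
          refine ⟨⟨hσ', hτ, ?_, by omega⟩, ?_⟩
          · refine Finset.ssubset_iff_subset_ne.2 ⟨?_, ?_⟩
            · intro x hx
              rcases mem_insert.1 (hs.1 (mem_insert_of_mem hx)) with rfl | h
              · exact absurd hx (hav _ hτ i)
              · exact h
            · rintro rfl
              omega
          · intro hm
            exact hnm (Or.inr ⟨(σ, τ), hm, i, hi, rfl⟩)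
  · obtain ⟨rfl, rfl⟩ := Prod.mk.inj h
    left
    rw [coneLevel_zero, coneLevel_base (hav _ hσ)]
    omega
  · obtain ⟨rfl, rfl⟩ := Prod.mk.inj h
    have hq' := hM.1 q hq
    have q1 := hav _ hq'.1
    have q2 := hav _ hq'.2.1
    right; right
    rw [coneLevel_succ hw q1 hi, coneLevel_succ hw q2 hi,
          coneStrip_insert q1, coneStrip_insert q2]
    exact ⟨rfl, rfl, hne _ hq'.2.1, Or.inr (Relation.TransGen.single (Or.inr hq))⟩

/-- `M'` is an acyclic matching on `X'`. -/
theorem coneMatch_isAcyclicMatching {U : Type*} [DecidableEq U] (d n : ℕ)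
    (X : Finset (Finset U)) (hX : IsComplex X) (hd : HasDim X d)
    (hn : X.card = n) (hn1 : 1 ≤ n)
    (w : Fin (n + 1) → U) (hw : Function.Injective w)
    (hwX : ∀ i : Fin (n + 1), ∀ σ ∈ X, w i ∉ σ)
    (M : Set (Finset U × Finset U)) (hM : IsAcyclicMatching X M) :
    IsAcyclicMatching (coneCx X n w) (coneMatch X M n w) := by
  have hav : ∀ σ ∈ X, Avoids w σ := fun σ hσ i => hwX i σ hσ
  refine ⟨coneMatch_isMatching hw hav hM.1, fun a ha => ?_⟩
  have key : ∀ b, Relation.TransGen (ModArc (coneCx X n w) (coneMatch X M n w)) a b →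
      coneRel X M w a b := by
    intro b hb
    induction hb with
    | single h => exact modArc_coneRel hX.1 hw hav hM.1 h
    | tail _ h ih => exact coneRel_trans ih (modArc_coneRel hX.1 hw hav hM.1 h)
  rcases key a ha with h | ⟨_, _, h⟩ | ⟨_, _, h, h' | h'⟩
  · omega
  · omega
  · exact h h'
  · exact hM.2 _ h'
end

section
/- Let M be an acyclic matching on X and let M' = { (σ ∪ {w_1} → σ) : σ ∈ X } ∪ { (σ ∪ {w_i} → τ ∪ {w_i}) : (σ → τ) ∈ M, 2 ≤ i ≤ n+1 }. Then the set of critical simplices of M' is exactly { {w_1} } ∪ { σ ∪ {w_i} : σ is a critical simplex of M or σ = ∅, 2 ≤ i ≤ n+1 }. In particular, if every critical simplex of M has dimension ≤ k, then every critical simplex of M' has dimension ≤ k+1. -/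
open Finset

/-- the critical simplices of `M'` are exactly
    `{w₁}` together with the simplices `σ ∪ {wᵢ}` for `σ` critical for `M` or `σ = ∅`
    and `2 ≤ i ≤ n+1`; in particular if all critical simplices of `M` have dimension
    ≤ k then all critical simplices of `M'` have dimension ≤ k+1. -/
theorem coneMatch_critical {U : Type*} [DecidableEq U] (d k n : ℕ)
    (X : Finset (Finset U)) (hX : IsComplex X) (hd : HasDim X d)
    (hn : X.card = n) (hn1 : 1 ≤ n)
    (w : Fin (n + 1) → U) (hw : Function.Injective w)
    (hwX : ∀ i : Fin (n + 1), ∀ σ ∈ X, w i ∉ σ)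
    (M : Set (Finset U × Finset U)) (hM : IsAcyclicMatching X M) :
    (∀ ρ : Finset U, IsCritical (coneCx X n w) (coneMatch X M n w) ρ ↔
      (ρ = {w 0} ∨ ∃ i : Fin (n + 1), i ≠ 0 ∧ ∃ σ : Finset U,
        (IsCritical X M σ ∨ σ = ∅) ∧ ρ = insert (w i) σ)) ∧
    ((∀ σ, IsCritical X M σ → σ.card ≤ k + 1) →
      ∀ ρ, IsCritical (coneCx X n w) (coneMatch X M n w) ρ → ρ.card ≤ k + 2) := by
  have hwX' : ∀ i : Fin (n + 1), ∀ σ ∈ insert (∅ : Finset U) X, w i ∉ σ := by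
    intro i σ hσ
    rcases Finset.mem_insert.1 hσ with rfl | h
    · simp
    · exact hwX i σ h
  have key : ∀ i j : Fin (n + 1), ∀ σ ∈ insert (∅ : Finset U) X, ∀ τ ∈ insert (∅ : Finset U) X,
      insert (w i) σ = insert (w j) τ → i = j ∧ σ = τ := by
    intro i j σ hσ τ hτ h
    have hij : i = j := by
      have h1 : w i ∈ insert (w j) τ := h ▸ Finset.mem_insert_self _ _
      rcases Finset.mem_insert.1 h1 with h2 | h2
      · exact hw h2
      · exact absurd h2 (hwX' i τ hτ)
    subst hij
    refine ⟨rfl, ?_⟩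
    rw [← Finset.erase_insert (hwX' i σ hσ), h, Finset.erase_insert (hwX' i τ hτ)]
  have he : (∅ : Finset U) ∈ insert (∅ : Finset U) X := Finset.mem_insert_self _ _
  have hm : ∀ σ ∈ X, σ ∈ insert (∅ : Finset U) X := fun σ h => Finset.mem_insert_of_mem h
  have hnX : ∀ i : Fin (n + 1), ∀ σ : Finset U, insert (w i) σ ∉ X := fun i σ h =>
    hwX i _ h (Finset.mem_insert_self _ _)
  have hne : ∀ σ ∈ X, σ ≠ ∅ := hX.1
  have hMX : ∀ p ∈ M, p.1 ∈ X ∧ p.2 ∈ X := fun p hp =>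
    ⟨(hM.1.1 p hp).1, (hM.1.1 p hp).2.1⟩
  have hcx : ∀ i : Fin (n + 1), ∀ σ ∈ insert (∅ : Finset U) X,
      insert (w i) σ ∈ coneCx X n w := by
    intro i σ hσ
    exact Finset.mem_union_right _ (Finset.mem_biUnion.2
      ⟨i, Finset.mem_univ _, Finset.mem_image.2 ⟨σ, hσ, rfl⟩⟩)
  have main : ∀ ρ : Finset U, IsCritical (coneCx X n w) (coneMatch X M n w) ρ ↔
      (ρ = {w 0} ∨ ∃ i : Fin (n + 1), i ≠ 0 ∧ ∃ σ : Finset U,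
        (IsCritical X M σ ∨ σ = ∅) ∧ ρ = insert (w i) σ) := by
    intro ρ
    constructor
    · rintro ⟨hρ, hcrit⟩
      rcases Finset.mem_union.1 hρ with h | h
      · exact absurd rfl (hcrit (insert (w 0) ρ, ρ) (Or.inl ⟨ρ, h, rfl⟩)).2
      · obtain ⟨i, -, h⟩ := Finset.mem_biUnion.1 h
        obtain ⟨σ, hσ, rfl⟩ := Finset.mem_image.1 h
        by_cases hi : i = 0
        · subst hi
          rcases Finset.mem_insert.1 hσ with rfl | hσ
          · left; simp
          · exact absurd rfl (hcrit (insert (w 0) σ, σ) (Or.inl ⟨σ, hσ, rfl⟩)).1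
        · right
          refine ⟨i, hi, σ, ?_, rfl⟩
          rcases Finset.mem_insert.1 hσ with h0 | hσ
          · exact Or.inr h0
          · refine Or.inl ⟨hσ, fun p hp => ?_⟩
            have := hcrit (insert (w i) p.1, insert (w i) p.2) (Or.inr ⟨p, hp, i, hi, rfl⟩)
            exact ⟨fun h => this.1 (by simp [h]), fun h => this.2 (by simp [h])⟩
    · rintro (rfl | ⟨i, hi, σ, hσ, rfl⟩)
      · have h0 : ({w 0} : Finset U) = insert (w 0) ∅ := by simp
        rw [h0]
        refine ⟨hcx 0 ∅ he, ?_⟩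
        rintro p (⟨τ, hτ, rfl⟩ | ⟨q, hq, j, hj, rfl⟩)
        · exact ⟨fun h => hne τ hτ (key _ _ _ (hm τ hτ) _ he h).2,
            fun h => hnX 0 ∅ (h ▸ hτ)⟩
        · exact ⟨fun h => hj (key _ _ _ (hm _ (hMX q hq).1) _ he h).1,
            fun h => hj (key _ _ _ (hm _ (hMX q hq).2) _ he h).1⟩
      · have hσ' : σ ∈ insert (∅ : Finset U) X := by
          rcases hσ with h | rfl
          · exact hm _ h.1
          · exact he
        refine ⟨hcx i σ hσ', ?_⟩
        rintro p (⟨τ, hτ, rfl⟩ | ⟨q, hq, j, hj, rfl⟩)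
        · exact ⟨fun h => hi (key _ _ _ (hm τ hτ) _ hσ' h).1.symm,
            fun h => hnX i σ (h ▸ hτ)⟩
        · have hq1 := (hMX q hq).1
          have hq2 := (hMX q hq).2
          constructor
          · intro h
            have h' := (key _ _ _ (hm _ hq1) _ hσ' h).2
            rcases hσ with hc | hc
            · exact (hc.2 q hq).1 h'
            · exact hne _ hq1 (h'.trans hc)
          · intro h
            have h' := (key _ _ _ (hm _ hq2) _ hσ' h).2
            rcases hσ with hc | hc
            · exact (hc.2 q hq).2 h'
            · exact hne _ hq2 (h'.trans hc)
  refine ⟨main, fun hk ρ hρ => ?_⟩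
  rcases (main ρ).1 hρ with rfl | ⟨i, -, σ, hσ, rfl⟩
  · simp
  · have h1 := Finset.card_insert_le (w i) σ
    rcases hσ with h | rfl
    · have := hk σ h
      omega
    · simp
end

section
/- (Patchwork theorem.) Let X be a finite simplicial complex, let P be a poset, and let φ : X → P be an order-preserving map (where the simplices of X are ordered by inclusion). Suppose that for every p ∈ P we are given an acyclic matching M_p on the subposet φ^{-1}(p), i.e., a matching consisting of arcs of H(X) with both endpoints in φ^{-1}(p) such that reversing its arcs in the induced subgraph of H(X) on φ^{-1}(p) creates no directed cycle. Then the union of the matchings M_p over all p ∈ P is an acyclic matching on X. -/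
open Finset

/-- Patchwork theorem: if `φ : X → P` is order-preserving and, for every
    `p ∈ P`, `M p` is an acyclic matching on the fiber `φ⁻¹(p)` (its arcs are arcs of
    `H(X)` with both endpoints in the fiber, and reversing them in the induced
    subgraph of `H(X)` on the fiber creates no directed cycle), then the union of the
    matchings `M p` is an acyclic matching on `X`. -/
theorem patchwork {U : Type*} [DecidableEq U] {P : Type*} [PartialOrder P]
    (X : Finset (Finset U)) (hX : IsComplex X)
    (φ : Finset U → P)
    (hφ : ∀ σ ∈ X, ∀ τ ∈ X, σ ⊆ τ → φ σ ≤ φ τ)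
    (M : P → Set (Finset U × Finset U))
    (harc : ∀ p : P, ∀ q ∈ M p, HasseArc X q.1 q.2 ∧ φ q.1 = p ∧ φ q.2 = p)
    (hmatch : ∀ p : P, ∀ a ∈ M p, ∀ b ∈ M p, a ≠ b →
      a.1 ≠ b.1 ∧ a.1 ≠ b.2 ∧ a.2 ≠ b.1 ∧ a.2 ≠ b.2)
    (hacyclic : ∀ p : P, ∀ a : Finset U,
      ¬ Relation.TransGen
          (fun a b => φ a = p ∧ φ b = p ∧
            ((HasseArc X a b ∧ (a, b) ∉ M p) ∨ (b, a) ∈ M p)) a a) :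
    IsAcyclicMatching X {q | ∃ p : P, q ∈ M p} := by
  have step : ∀ a b, ModArc X {q | ∃ p : P, q ∈ M p} a b → φ b ≤ φ a ∧ (φ b = φ a →
      (φ a = φ a ∧ φ b = φ a ∧
        ((HasseArc X a b ∧ (a, b) ∉ M (φ a)) ∨ (b, a) ∈ M (φ a)))) := by
    rintro a b (⟨h, hn⟩ | ⟨p, hp⟩)
    · exact ⟨hφ b h.2.1 a h.1 h.2.2.1.1,
        fun e => ⟨rfl, e, Or.inl ⟨h, fun hm => hn ⟨_, hm⟩⟩⟩⟩
    · obtain ⟨_, h1, h2⟩ := harc p _ hp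
      simp only at h1 h2
      subst h2
      exact ⟨h1.le, fun e => ⟨rfl, e, Or.inr hp⟩⟩
  have key : ∀ a b, Relation.TransGen (ModArc X {q | ∃ p : P, q ∈ M p}) a b →
      φ b ≤ φ a ∧ (φ b = φ a → Relation.TransGen
          (fun x y => φ x = φ a ∧ φ y = φ a ∧
            ((HasseArc X x y ∧ (x, y) ∉ M (φ a)) ∨ (y, x) ∈ M (φ a))) a b) := by
    intro a b h
    induction h with
    | single h => exact ⟨(step _ _ h).1, fun e => Relation.TransGen.single ((step _ _ h).2 e)⟩
    | @tail c d _ h ih =>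
      obtain ⟨s1, s2⟩ := step _ _ h
      refine ⟨s1.trans ih.1, fun e => ?_⟩
      have hc : φ c = φ a := le_antisymm ih.1 (e ▸ s1)
      refine Relation.TransGen.tail (ih.2 hc) ?_
      have := s2 (e.trans hc.symm)
      rw [hc] at this
      exact ⟨hc, this.2⟩
  refine ⟨⟨?_, ?_⟩, fun a h => hacyclic (φ a) a ((key a a h).2 rfl)⟩
  · rintro q ⟨p, hq⟩
    exact (harc p q hq).1
  · rintro a ⟨p, ha⟩ b ⟨q, hb⟩ hab
    by_cases hpq : p = q
    · subst hpq
      exact hmatch p a ha b hb hab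
    · obtain ⟨_, a1, a2⟩ := harc p a ha
      obtain ⟨_, b1, b2⟩ := harc q b hb
      refine ⟨fun e => hpq ?_, fun e => hpq ?_, fun e => hpq ?_, fun e => hpq ?_⟩
      · rw [← a1, e, b1]
      · rw [← a1, e, b2]
      · rw [← a2, e, b1]
      · rw [← a2, e, b2]
end

section
/- Let M' be a matching on X' and let j ∈ {1, …, n+1} be an index such that no arc of the form (σ ∪ {w_j} → σ) with σ ∈ X belongs to M'. Define M = { (σ → τ) : σ, τ ∈ X and (σ ∪ {w_j} → τ ∪ {w_j}) ∈ M' }. Then M is a matching on X: M is a set of arcs of the Hasse diagram H(X) and every simplex of X belongs to at most one arc of M. -/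
open Finset

/-- The matching `M = { (σ → τ) : σ, τ ∈ X and (σ ∪ {w_j} → τ ∪ {w_j}) ∈ M' }`. -/
def pullMatch {U : Type*} [DecidableEq U] (X : Finset (Finset U))
    (M' : Set (Finset U × Finset U)) (wj : U) : Set (Finset U × Finset U) :=
  {p | p.1 ∈ X ∧ p.2 ∈ X ∧ (insert wj p.1, insert wj p.2) ∈ M'}

/-- `M` is a matching on `X`. -/
theorem pullMatch_isMatching {U : Type*} [DecidableEq U] (d n : ℕ)
    (X : Finset (Finset U)) (hX : IsComplex X) (hd : HasDim X d)
    (hn : X.card = n) (hn1 : 1 ≤ n)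
    (w : Fin (n + 1) → U) (hw : Function.Injective w)
    (hwX : ∀ i : Fin (n + 1), ∀ σ ∈ X, w i ∉ σ)
    (M' : Set (Finset U × Finset U)) (hM' : IsMatching (coneCx X n w) M')
    (j : Fin (n + 1)) (hj : ∀ σ ∈ X, (insert (w j) σ, σ) ∉ M') :
    IsMatching X (pullMatch X M' (w j)) := by
  have inj : ∀ a ∈ X, ∀ b ∈ X, insert (w j) a = insert (w j) b → a = b := by
    intro a ha b hb h
    have := congrArg (fun s => Finset.erase s (w j)) h
    simpa [Finset.erase_insert (hwX j a ha), Finset.erase_insert (hwX j b hb)] using this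
  obtain ⟨h1, h2⟩ := hM'
  refine ⟨?_, ?_⟩
  · rintro ⟨a, b⟩ ⟨ha, hb, hab⟩
    dsimp only at ha hb hab ⊢
    obtain ⟨-, -, hs, hc⟩ := h1 _ hab
    dsimp only at hs hc
    rw [Finset.card_insert_of_notMem (hwX j a ha),
      Finset.card_insert_of_notMem (hwX j b hb)] at hc
    have hsub : b ⊆ a := (Finset.insert_subset_insert_iff (hwX j b hb)).1 hs.1
    refine ⟨ha, hb, Finset.ssubset_iff_subset_ne.2 ⟨hsub, ?_⟩, by omega⟩
    rintro rfl
    omega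
  · rintro ⟨a, b⟩ ⟨ha, hb, hab⟩ ⟨c, e⟩ ⟨hc, he, hce⟩ hne
    dsimp only at ha hb hab hc he hce ⊢
    have hne' : (insert (w j) a, insert (w j) b) ≠ (insert (w j) c, insert (w j) e) := by
      intro h
      rw [Prod.mk.injEq] at h
      exact hne (Prod.ext (inj a ha c hc h.1) (inj b hb e he h.2))
    obtain ⟨k1, k2, k3, k4⟩ := h2 _ hab _ hce hne'
    exact ⟨fun h => k1 (by simp [h]), fun h => k2 (by simp [h]),
      fun h => k3 (by simp [h]), fun h => k4 (by simp [h])⟩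
end

section
/- Let M' be an acyclic matching on X' and let j ∈ {1, …, n+1} be an index such that no arc of the form (σ ∪ {w_j} → σ) with σ ∈ X belongs to M'. Define M = { (σ → τ) : σ, τ ∈ X and (σ ∪ {w_j} → τ ∪ {w_j}) ∈ M' }. Then M is an acyclic matching on X. -/
open Finset

/-- `M` is an acyclic matching on `X`. -/
theorem pullMatch_isAcyclicMatching {U : Type*} [DecidableEq U] (d n : ℕ)
    (X : Finset (Finset U)) (hX : IsComplex X) (hd : HasDim X d)
    (hn : X.card = n) (hn1 : 1 ≤ n)
    (w : Fin (n + 1) → U) (hw : Function.Injective w)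
    (hwX : ∀ i : Fin (n + 1), ∀ σ ∈ X, w i ∉ σ)
    (M' : Set (Finset U × Finset U)) (hM' : IsAcyclicMatching (coneCx X n w) M')
    (j : Fin (n + 1)) (hj : ∀ σ ∈ X, (insert (w j) σ, σ) ∉ M') :
    IsAcyclicMatching X (pullMatch X M' (w j)) := by
  have hinj : ∀ a ∈ X, ∀ b ∈ X, insert (w j) a = insert (w j) b → a = b := by
    intro a ha b hb h
    have := congrArg (fun s => s.erase (w j)) h
    simpa [Finset.erase_insert (hwX j a ha), Finset.erase_insert (hwX j b hb)] using this
  have hmem : ∀ a ∈ X, insert (w j) a ∈ coneCx X n w := by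
    intro a ha
    refine Finset.mem_union_right _ (Finset.mem_biUnion.2 ⟨j, Finset.mem_univ _, ?_⟩)
    exact Finset.mem_image.2 ⟨a, Finset.mem_insert_of_mem ha, rfl⟩
  obtain ⟨⟨hA, hB⟩, hC⟩ := hM'
  refine ⟨⟨?_, ?_⟩, ?_⟩
  · rintro ⟨a, b⟩ ⟨ha, hb, hab⟩
    obtain ⟨-, -, hss, hcard⟩ := hA _ hab
    simp only at ha hb hss hcard ⊢
    rw [Finset.card_insert_of_notMem (hwX j a ha),
      Finset.card_insert_of_notMem (hwX j b hb)] at hcard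
    have hsub : b ⊆ a := by
      intro x hx
      rcases Finset.mem_insert.1 (hss.1 (Finset.mem_insert_of_mem hx)) with h | h
      · exact absurd (h ▸ hx) (hwX j b hb)
      · exact h
    refine ⟨ha, hb, Finset.ssubset_iff_subset_ne.2 ⟨hsub, ?_⟩, by omega⟩
    rintro rfl
    omega
  · rintro ⟨a, b⟩ ⟨ha, hb, hab⟩ ⟨c, e⟩ ⟨hc, he, hce⟩ hne
    simp only at ha hb hc he hab hce
    have hne' : (insert (w j) a, insert (w j) b) ≠ (insert (w j) c, insert (w j) e) := by
      intro h
      rw [Prod.mk.injEq] at h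
      exact hne (Prod.ext (hinj a ha c hc h.1) (hinj b hb e he h.2))
    obtain ⟨h1, h2, h3, h4⟩ := hB _ hab _ hce hne'
    exact ⟨fun h => h1 (congrArg (insert (w j)) h), fun h => h2 (congrArg (insert (w j)) h),
      fun h => h3 (congrArg (insert (w j)) h), fun h => h4 (congrArg (insert (w j)) h)⟩
  · intro a ha
    refine hC (insert (w j) a) (Relation.TransGen.lift (insert (w j)) ?_ _ _ ha)
    rintro a b (⟨⟨ha, hb, hss, hcard⟩, hnot⟩ | ⟨-, -, hba⟩)
    · left
      have hcard' : (insert (w j) a).card = (insert (w j) b).card + 1 := by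
        rw [Finset.card_insert_of_notMem (hwX j a ha),
          Finset.card_insert_of_notMem (hwX j b hb), hcard]
      refine ⟨⟨hmem a ha, hmem b hb, Finset.ssubset_iff_subset_ne.2
        ⟨Finset.insert_subset_insert _ hss.1, ?_⟩, hcard'⟩, fun h => hnot ⟨ha, hb, h⟩⟩
      intro h
      rw [h] at hcard'
      omega
    · exact Or.inr hba
end

section
/- Let M' be a matching on X' and let j ∈ {1, …, n+1} be an index such that no arc of the form (σ ∪ {w_j} → σ) with σ ∈ X belongs to M'. Define M = { (σ → τ) : σ, τ ∈ X and (σ ∪ {w_j} → τ ∪ {w_j}) ∈ M' }. Then the set of critical simplices of M is exactly { σ ∈ X : σ ∪ {w_j} is a critical simplex of M', or (σ ∪ {w_j} → {w_j}) ∈ M' }. In particular, if every critical simplex of M' has dimension ≤ k+1, then every critical simplex of M has dimension ≤ k. -/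
open Finset

theorem coneCx_mem_apex {U : Type*} [DecidableEq U] (n : ℕ)
    (X : Finset (Finset U)) (w : Fin (n + 1) → U)
    (hwX : ∀ i : Fin (n + 1), ∀ σ ∈ X, w i ∉ σ) (j : Fin (n + 1))
    (ρ : Finset U) (hρ : ρ ∈ coneCx X n w) (hj : w j ∈ ρ) :
    ρ = {w j} ∨ ∃ τ ∈ X, ρ = insert (w j) τ := by
  unfold coneCx at hρ
  simp only [Finset.mem_union, Finset.mem_biUnion, Finset.mem_univ, true_and,
    Finset.mem_image, Finset.mem_insert] at hρ
  rcases hρ with h | ⟨i, τ, h | h, rfl⟩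
  · exact absurd hj (hwX j ρ h)
  · subst h
    left
    have : w j = w i := by simpa using hj
    rw [this]; rfl
  · right
    rcases Finset.mem_insert.1 hj with e | e
    · exact ⟨τ, h, by rw [e]⟩
    · exact absurd e (hwX j τ h)

/-- the critical simplices of `M` are exactly the `σ ∈ X` such that
    `σ ∪ {w_j}` is critical for `M'` or `(σ ∪ {w_j} → {w_j}) ∈ M'`; in particular, if
    all critical simplices of `M'` have dimension ≤ k+1, then all critical simplices
    of `M` have dimension ≤ k. -/
theorem pullMatch_critical {U : Type*} [DecidableEq U] (d k n : ℕ)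
    (X : Finset (Finset U)) (hX : IsComplex X) (hd : HasDim X d)
    (hn : X.card = n) (hn1 : 1 ≤ n)
    (w : Fin (n + 1) → U) (hw : Function.Injective w)
    (hwX : ∀ i : Fin (n + 1), ∀ σ ∈ X, w i ∉ σ)
    (M' : Set (Finset U × Finset U)) (hM' : IsMatching (coneCx X n w) M')
    (j : Fin (n + 1)) (hj : ∀ σ ∈ X, (insert (w j) σ, σ) ∉ M') :
    (∀ σ : Finset U, IsCritical X (pullMatch X M' (w j)) σ ↔
      (σ ∈ X ∧ (IsCritical (coneCx X n w) M' (insert (w j) σ) ∨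
        (insert (w j) σ, ({w j} : Finset U)) ∈ M'))) ∧
    ((∀ ρ, IsCritical (coneCx X n w) M' ρ → ρ.card ≤ k + 2) →
      ∀ σ, IsCritical X (pullMatch X M' (w j)) σ → σ.card ≤ k + 1) := by
  have hne : ∀ τ ∈ X, insert (w j) τ ≠ ({w j} : Finset U) := by
    intro τ hτ e
    obtain ⟨x, hx⟩ := Finset.nonempty_iff_ne_empty.2 (hX.1 τ hτ)
    have hx2 : x ∈ ({w j} : Finset U) := e ▸ Finset.mem_insert_of_mem hx
    rw [Finset.mem_singleton] at hx2
    exact hwX j τ hτ (hx2 ▸ hx)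
  have main : ∀ σ : Finset U, IsCritical X (pullMatch X M' (w j)) σ ↔
      (σ ∈ X ∧ (IsCritical (coneCx X n w) M' (insert (w j) σ) ∨
        (insert (w j) σ, ({w j} : Finset U)) ∈ M')) := by
    intro σ
    constructor
    · rintro ⟨hσ, hc⟩
      refine ⟨hσ, ?_⟩
      by_contra hcon
      rw [not_or] at hcon
      obtain ⟨h1, h2⟩ := hcon
      apply h1
      refine ⟨?_, ?_⟩
      · unfold coneCx
        simp only [Finset.mem_union, Finset.mem_biUnion, Finset.mem_univ, true_and,
          Finset.mem_image, Finset.mem_insert]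
        exact Or.inr ⟨j, σ, Or.inr hσ, rfl⟩
      · rintro ⟨a, b⟩ hp
        obtain ⟨ha, hb, hsub, hcard⟩ := hM'.1 _ hp
        simp only at ha hb hsub hcard
        refine ⟨?_, ?_⟩
        · rintro rfl
          by_cases hwb : w j ∈ b
          · rcases coneCx_mem_apex n X w hwX j b hb hwb with e | ⟨τ, hτ, e⟩
            · exact h2 (e ▸ hp)
            · exact (hc (σ, τ) ⟨hσ, hτ, e ▸ hp⟩).1 rfl
          · have hbs : b ⊆ σ := (Finset.subset_insert_iff_of_notMem hwb).1 hsub.1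
            rw [Finset.card_insert_of_notMem (hwX j σ hσ)] at hcard
            have : b = σ := Finset.eq_of_subset_of_card_le hbs (by omega)
            exact hj σ hσ (this ▸ hp)
        · rintro rfl
          have hwa : w j ∈ a := hsub.1 (Finset.mem_insert_self _ _)
          rcases coneCx_mem_apex n X w hwX j a ha hwa with e | ⟨τ, hτ, e⟩
          · rw [e, Finset.card_insert_of_notMem (hwX j σ hσ), Finset.card_singleton] at hcard
            have := Finset.card_pos.2 (Finset.nonempty_iff_ne_empty.2 (hX.1 σ hσ))
            omega
          · exact (hc (τ, σ) ⟨hτ, hσ, e ▸ hp⟩).2 rfl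
    · rintro ⟨hσ, h⟩
      refine ⟨hσ, ?_⟩
      rintro ⟨a, b⟩ ⟨ha, hb, hp⟩
      simp only at ha hb hp
      rcases h with h | h
      · have := h.2 _ hp
        exact ⟨fun e => this.1 (congrArg (fun s : Finset U => insert (w j) s) e), fun e => this.2 (congrArg (fun s : Finset U => insert (w j) s) e)⟩
      · have hn2 : (insert (w j) a, insert (w j) b) ≠ (insert (w j) σ, ({w j} : Finset U)) :=
          fun e => hne b hb (Prod.mk.inj e).2
        have := hM'.2 _ hp _ h hn2
        exact ⟨fun e => this.1 (congrArg (fun s : Finset U => insert (w j) s) e), fun e => this.2.2.1 (congrArg (fun s : Finset U => insert (w j) s) e)⟩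
  refine ⟨main, ?_⟩
  intro hk σ hσ
  obtain ⟨hs, h | h⟩ := (main σ).1 hσ
  · have := hk _ h
    rw [Finset.card_insert_of_notMem (hwX j σ hs)] at this
    omega
  · have := (hM'.1 _ h).2.2.2
    simp only [Finset.card_insert_of_notMem (hwX j σ hs), Finset.card_singleton] at this
    omega
end

section
/- Let X be a finite simplicial complex and let M be an acyclic matching on X such that no critical simplex of M has dimension > k. Let M̃ be the matching obtained from M by removing all arcs (σ → τ) with dim σ ≤ k. Then M̃ is an acyclic matching on X, every critical simplex of M̃ has dimension ≤ k, and the set of critical simplices of M̃ forms a subcomplex of X (i.e., it is closed under taking nonempty subsets). -/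
open Finset

/-- removing from an acyclic matching `M` (with no critical simplex of
    dimension > k) all arcs `(σ → τ)` with `dim σ ≤ k` yields an acyclic matching `M̃`
    whose critical simplices have dimension ≤ k and form a subcomplex of `X`. -/
theorem prune_matching {U : Type*} [DecidableEq U] (k : ℕ)
    (X : Finset (Finset U)) (hX : IsComplex X)
    (M : Set (Finset U × Finset U)) (hM : IsAcyclicMatching X M)
    (hcrit : ∀ σ, IsCritical X M σ → σ.card ≤ k + 1) :
    IsAcyclicMatching X {p ∈ M | ¬ p.1.card ≤ k + 1} ∧
    (∀ σ, IsCritical X {p ∈ M | ¬ p.1.card ≤ k + 1} σ → σ.card ≤ k + 1) ∧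
    (∀ σ, IsCritical X {p ∈ M | ¬ p.1.card ≤ k + 1} σ →
      ∀ τ : Finset U, τ ⊆ σ → τ ≠ ∅ → IsCritical X {p ∈ M | ¬ p.1.card ≤ k + 1} τ) := by
  obtain ⟨⟨hH, hm⟩, hac⟩ := hM
  have arc : ∀ a b, ModArc X {p ∈ M | ¬ p.1.card ≤ k + 1} a b →
      (a.card ≤ k → b.card < a.card) ∧ (ModArc X M a b ∨ b.card ≤ k) := by
    rintro a b (⟨h, hn⟩ | ⟨h, hc⟩)
    · have hcard := h.2.2.2
      refine ⟨fun _ => by omega, ?_⟩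
      by_cases hab : (a, b) ∈ M
      · right
        by_contra hb
        exact hn ⟨hab, by simp only; omega⟩
      · exact Or.inl (Or.inl ⟨h, hab⟩)
    · have hcard := (hH _ h).2.2.2
      simp only at hcard hc
      exact ⟨fun _ => by omega, Or.inl (Or.inr h)⟩
  have path : ∀ a b, Relation.TransGen (ModArc X {p ∈ M | ¬ p.1.card ≤ k + 1}) a b →
      (a.card ≤ k → b.card < a.card) ∧
        (Relation.TransGen (ModArc X M) a b ∨ b.card ≤ k) := by
    intro a b h
    induction h with
    | single h =>
      obtain ⟨h1, h2⟩ := arc _ _ h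
      exact ⟨h1, h2.imp_left Relation.TransGen.single⟩
    | tail _ h ih =>
      obtain ⟨h1, h2⟩ := arc _ _ h
      obtain ⟨i1, i2⟩ := ih
      refine ⟨fun ha => ?_, ?_⟩
      · have := i1 ha
        have := h1 (by omega)
        omega
      · rcases i2 with i2 | i2
        · exact h2.imp_left i2.tail
        · right
          have := h1 i2
          omega
  have hdim : ∀ σ, IsCritical X {p ∈ M | ¬ p.1.card ≤ k + 1} σ → σ.card ≤ k + 1 := by
    intro σ hσ
    by_contra hlt
    refine hlt (hcrit σ ⟨hσ.1, fun p hp => ?_⟩)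
    have hcard := (hH p hp).2.2.2
    refine ⟨fun h => ?_, fun h => ?_⟩
    · exact (hσ.2 p ⟨hp, by rw [h]; exact hlt⟩).1 h
    · exact (hσ.2 p ⟨hp, by rw [hcard, h]; omega⟩).2 h
  refine ⟨⟨⟨fun p hp => hH p hp.1, fun p hp q hq => hm p hp.1 q hq.1⟩, fun a h => ?_⟩,
    hdim, ?_⟩
  · obtain ⟨h1, h2 | h2⟩ := path a a h
    · exact hac a h2
    · exact lt_irrefl _ (h1 h2)
  · intro σ hσ τ hτ hne
    rcases eq_or_ne τ σ with rfl | hneq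
    · exact hσ
    have hlt := Finset.card_lt_card (hτ.ssubset_of_ne hneq)
    have hle := hdim σ hσ
    refine ⟨hX.2 σ hσ.1 τ hτ hne, fun p hp => ?_⟩
    have hcard := (hH p hp.1).2.2.2
    have hc := hp.2
    constructor
    · rintro rfl
      omega
    · rintro rfl
      omega
end
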